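/- There exists ε₀ ∈ (0,1), depending only on k, C1, C2, C3, C4, such that for all ε ∈ (0, ε₀] the following deterministic implication holds: if the orbit satisfies x(0) ∈ 𝔯_I and there exist integers 0 < M₁ < M₂ ≤ N with x(M₁) ∈ 𝔯_I^c and x(M₂) ∈ 𝔯_I, then there exist integers 2 < N₁ ≤ N₂ < N such that ∏_{n=N₁}^{N₂} k κ_n² > (2 C4² K² ε²)⁻¹. -/

import Mathlib

open Matrix

/-- The Möbius action of a real `2×2` matrix on the real projective line `ℝ̄ = ℝ ∪ {∞}`,
extended projectively through `∞`. -/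
noncomputable def mobius (M : Matrix (Fin 2) (Fin 2) ℝ) (x : OnePoint ℝ) : OnePoint ℝ :=
  match (x : Option ℝ) with
  | none => if M 1 0 = 0 then OnePoint.infty else ((M 0 0 / M 1 0 : ℝ) : OnePoint ℝ)
  | some r =>
      if M 1 0 * r + M 1 1 = 0 then OnePoint.infty
      else ((M 0 0 * r + M 0 1) / (M 1 0 * r + M 1 1) : ℝ)

/-- The region `𝔯_I = {x ∈ ℝ : x ≤ 0}` inside `ℝ̄`. -/
def regI (x : OnePoint ℝ) : Prop := ∃ r : ℝ, x = (r : OnePoint ℝ) ∧ r ≤ 0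

/-- The rotation matrix `Q_n` of the perturbed Prüfer dynamics. -/
noncomputable def Qmat (ε a b α β γ δ : ℝ) : Matrix (Fin 2) (Fin 2) ℝ :=
  !![1 + ε ^ 2 * α, ε * (a - b - ε * β); -ε * (a + b + ε * γ), 1 + ε ^ 2 * δ]

/-- The hyperbolic matrix `D_n = diag(κ, 1/κ)`. -/
noncomputable def Dmat (κ : ℝ) : Matrix (Fin 2) (Fin 2) ℝ := !![κ, 0; 0, κ⁻¹]

/-- The integer-time orbit `x(n)` of the Dyson–Schmidt dynamics:
`x(n) = Q_n · (D_n · x(n−1))`. -/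
noncomputable def orbit (Q D : ℕ → Matrix (Fin 2) (Fin 2) ℝ) (x0 : OnePoint ℝ) :
    ℕ → OnePoint ℝ
  | 0 => x0
  | n + 1 => mobius (Q (n + 1)) (mobius (D (n + 1)) (orbit Q D x0 n))


lemma mobius_D_coe (κ y : ℝ) (hκ : 0 < κ) :
    mobius (Dmat κ) (y : OnePoint ℝ) = ((κ ^ 2 * y : ℝ) : OnePoint ℝ) := by
  have h : κ⁻¹ ≠ 0 := inv_ne_zero hκ.ne'
  have e : mobius (Dmat κ) (y : OnePoint ℝ) =
      if (Dmat κ) 1 0 * y + (Dmat κ) 1 1 = 0 then OnePoint.infty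
      else ((((Dmat κ) 0 0 * y + (Dmat κ) 0 1) / ((Dmat κ) 1 0 * y + (Dmat κ) 1 1) : ℝ) :
        OnePoint ℝ) := rfl
  rw [e]
  simp only [Dmat, Matrix.of_apply, Matrix.cons_val', Matrix.cons_val_zero, Matrix.cons_val_one,
    Matrix.cons_val_fin_one, zero_mul, zero_add, add_zero]
  rw [if_neg h]
  congr 1
  field_simp

set_option maxHeartbeats 1000000 in
/-- One step of `Q`. -/
lemma mobius_Q_coe (ε a b α β γ δ C1 C2 C R θ q z : ℝ) (hε : 0 < ε) (hε1 : ε ≤ 1)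
    (hC1 : 0 < C1) (hC12 : C1 ≤ C2) (h1 : C1 ≤ a - |b|) (h2 : a + |b| ≤ C2)
    (hα : |α| ≤ C) (hβ : |β| ≤ C) (hγ : |γ| ≤ C) (hδ : |δ| ≤ C)
    (hθ : 0 < θ) (hθ1 : θ < 1) (hq : q * (1 - θ) = 1 + θ)
    (hR : 0 < R) (hRθ : R * θ = 4 * C2)
    (e1 : ε * C < C1) (e2 : ε * C ≤ θ / 2) (e3 : R * ε ≤ 1)
    (hz : R * ε * z ≤ 1) :
    ∃ w : ℝ, mobius (Qmat ε a b α β γ δ) (z : OnePoint ℝ) = (w : OnePoint ℝ) ∧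
      w ≤ q * max z (R * ε) ∧ (0 < z → 0 < w) := by
  have hC : 0 ≤ C := (abs_nonneg α).trans hα
  rw [abs_le] at hα hβ hγ hδ
  have hb1 := le_abs_self b
  have hb2 := neg_abs_le b
  have hb0 := abs_nonneg b
  have small : ∀ t : ℝ, -C ≤ t ∧ t ≤ C → -(θ / 2) ≤ ε ^ 2 * t ∧ ε ^ 2 * t ≤ θ / 2 := by
    intro t ⟨ht1, ht2⟩
    have hs : ε ^ 2 * C ≤ θ / 2 := by nlinarith [mul_nonneg hε.le hC]
    constructor <;> nlinarith [sq_nonneg ε]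
  have small1 : ∀ t : ℝ, -C ≤ t ∧ t ≤ C → -C1 < ε * t ∧ ε * t < C1 := by
    intro t ⟨ht1, ht2⟩
    constructor <;> nlinarith
  obtain ⟨hp1, hp2⟩ := small α hα
  obtain ⟨hd1, hd2⟩ := small δ hδ
  obtain ⟨hu1, hu2⟩ := small1 β hβ
  obtain ⟨hv1, hv2⟩ := small1 γ hγ
  set p := 1 + ε ^ 2 * α with hp
  set d := 1 + ε ^ 2 * δ with hd
  obtain ⟨u, hu⟩ : ∃ u, u = ε * (a - b - ε * β) := ⟨_, rfl⟩
  obtain ⟨v, hv⟩ : ∃ v, v = ε * (a + b + ε * γ) := ⟨_, rfl⟩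
  have hu0 : 0 < u := by rw [hu]; apply mul_pos hε; linarith
  have hv0 : 0 < v := by rw [hv]; apply mul_pos hε; linarith
  have huH : u ≤ R * ε * (θ / 2) := by
    have : u ≤ ε * (2 * C2) := by rw [hu]; apply mul_le_mul_of_nonneg_left _ hε.le; linarith
    linear_combination this - ε / 2 * hRθ
  have hvH : v ≤ R * ε * (θ / 2) := by
    have : v ≤ ε * (2 * C2) := by rw [hv]; apply mul_le_mul_of_nonneg_left _ hε.le; linarith
    linear_combination this - ε / 2 * hRθ
  have hvz : v * z ≤ θ / 2 := by
    rcases le_total z 0 with h | h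
    · have := mul_nonpos_of_nonneg_of_nonpos hv0.le h
      linarith
    · have h5 := mul_le_mul_of_nonneg_right hvH h
      have h6 := mul_le_mul_of_nonneg_right hz (half_pos hθ).le
      linarith
  have hden : 1 - θ ≤ d - v * z := by linarith
  have hden0 : 0 < d - v * z := by linarith
  have hp0 : 0 < p := by linarith
  have e : mobius (Qmat ε a b α β γ δ) (z : OnePoint ℝ) =
      if (Qmat ε a b α β γ δ) 1 0 * z + (Qmat ε a b α β γ δ) 1 1 = 0 then OnePoint.infty
      else ((((Qmat ε a b α β γ δ) 0 0 * z + (Qmat ε a b α β γ δ) 0 1) /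
        ((Qmat ε a b α β γ δ) 1 0 * z + (Qmat ε a b α β γ δ) 1 1) : ℝ) :
        OnePoint ℝ) := rfl
  have eden : -ε * (a + b + ε * γ) * z + (1 + ε ^ 2 * δ) = d - v * z := by rw [hv, hd]; ring
  refine ⟨(p * z + u) / (d - v * z), ?_, ?_, ?_⟩
  · rw [e]
    simp only [Qmat, Matrix.of_apply, Matrix.cons_val', Matrix.cons_val_zero,
      Matrix.cons_val_one, Matrix.cons_val_fin_one]
    rw [eden, if_neg hden0.ne', ← hu]
  · rw [div_le_iff₀ hden0]
    set m := max z (R * ε) with hm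
    have m1 : z ≤ m := le_max_left _ _
    have m2 : R * ε ≤ m := le_max_right _ _
    have m0 : 0 < m := lt_of_lt_of_le (mul_pos hR hε) m2
    have hq0 : 0 < q := by
      refine pos_of_mul_pos_left (b := 1 - θ) ?_ (by linarith)
      linarith
    calc p * z + u ≤ (1 + θ / 2) * m + m * (θ / 2) := by
            have : p * z ≤ p * m := mul_le_mul_of_nonneg_left m1 hp0.le
            have : p * m ≤ (1 + θ / 2) * m := mul_le_mul_of_nonneg_right (by linarith) m0.le
            have : R * ε * (θ / 2) ≤ m * (θ / 2) := mul_le_mul_of_nonneg_right m2 (by linarith)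
            linarith
      _ = q * m * (1 - θ) := by linear_combination -m * hq
      _ ≤ _ := mul_le_mul_of_nonneg_left hden (mul_pos hq0 m0).le
  · intro h
    exact div_pos (by positivity) hden0

set_option maxHeartbeats 2000000 in
/-- There is `ε₀ ∈ (0,1)`, depending only on `k, C1, C2, C3, C4`, such that for
all `ε ∈ (0,ε₀]`: if the orbit starts in `𝔯_I`, leaves it at some time `M₁` and returns at a
later time `M₂ ≤ N`, then some window product `∏_{n=N₁}^{N₂} kκ_n²` with `2 < N₁ ≤ N₂ < N`
exceeds `(2C4²K²ε²)⁻¹`, where `K = 2C2(1−k⁻¹)⁻¹`. -/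
theorem rotation_forces_large_window_product
    (k C1 C2 C3 C4 : ℝ) (hk : 1 < k) (hC1 : 0 < C1) (hC12 : C1 ≤ C2) (hC4 : 0 < C4) :
    ∃ ε₀ : ℝ, ε₀ ∈ Set.Ioo (0 : ℝ) 1 ∧
      ∀ ε ∈ Set.Ioc (0 : ℝ) ε₀, ∀ a b α β γ δ κ : ℕ → ℝ,
        (∀ n : ℕ, 1 ≤ n →
          C1 ≤ a n - |b n| ∧ a n + |b n| ≤ C2 ∧
          |α n| ≤ C3 ∧ |β n| ≤ C3 ∧ |γ n| ≤ C3 ∧ |δ n| ≤ C3 ∧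
          0 < κ n ∧ κ n ≤ C4) →
        ∀ x0 : OnePoint ℝ, ∀ N M₁ M₂ : ℕ,
          regI x0 → 0 < M₁ → M₁ < M₂ → M₂ ≤ N →
          ¬ regI (orbit (fun n => Qmat ε (a n) (b n) (α n) (β n) (γ n) (δ n))
              (fun n => Dmat (κ n)) x0 M₁) →
          regI (orbit (fun n => Qmat ε (a n) (b n) (α n) (β n) (γ n) (δ n))
              (fun n => Dmat (κ n)) x0 M₂) →
          ∃ N₁ N₂ : ℕ, 2 < N₁ ∧ N₁ ≤ N₂ ∧ N₂ < N ∧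
            (2 * C4 ^ 2 * (2 * C2 * (1 - k⁻¹)⁻¹) ^ 2 * ε ^ 2)⁻¹ <
              ∏ n ∈ Finset.Icc N₁ N₂, k * κ n ^ 2 := by
  have hk0 : 0 < k := by linarith
  set q := √k with hqdef
  have hq2 : q * q = k := Real.mul_self_sqrt hk0.le
  have hq1 : 1 < q := by rw [hqdef]; exact Real.lt_sqrt_of_sq_lt (by simpa using hk)
  have hq0 : 0 < q := by linarith
  obtain ⟨θ, hθdef⟩ : ∃ θ, θ = (q - 1) / (q + 1) := ⟨_, rfl⟩
  have hθ : 0 < θ := by rw [hθdef]; exact div_pos (by linarith) (by linarith)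
  have hθ1 : θ < 1 := by rw [hθdef, div_lt_one (by linarith)]; linarith
  have hqθ : q * (1 - θ) = 1 + θ := by rw [hθdef]; field_simp; ring
  have hC2 : 0 < C2 := by linarith
  obtain ⟨R, hRdef⟩ : ∃ R, R = 4 * C2 / θ := ⟨_, rfl⟩
  have hR : 0 < R := by rw [hRdef]; positivity
  have hRθ : R * θ = 4 * C2 := by rw [hRdef]; field_simp
  obtain ⟨C, hCdef⟩ : ∃ C, C = |C3| + 1 := ⟨_, rfl⟩
  have hC : 0 < C := by rw [hCdef]; positivity
  have hC3 : C3 ≤ C := by rw [hCdef]; linarith [le_abs_self C3]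
  obtain ⟨E, hEdef⟩ : ∃ E, E = q * C4 ^ 2 + 1 := ⟨_, rfl⟩
  have hE1 : 1 ≤ E := by rw [hEdef]; have : 0 < q * C4 ^ 2 := by positivity
                         linarith
  have hE0 : 0 < E := by linarith
  obtain ⟨c, hcdef⟩ : ∃ c, c = 1 / (R * C4 ^ 2 * (q * R) * E) := ⟨_, rfl⟩
  have hc : 0 < c := by rw [hcdef]; positivity
  have hKi : 0 < (1 - k⁻¹)⁻¹ := by
    apply inv_pos.mpr; have := inv_lt_one_of_one_lt₀ hk; linarith
  obtain ⟨t, htdef⟩ : ∃ t, t = (2 * C4 ^ 2 * (2 * C2 * (1 - k⁻¹)⁻¹) ^ 2)⁻¹ := ⟨_, rfl⟩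
  obtain ⟨L, hL⟩ := pow_unbounded_of_one_lt (t / c) hq1
  have hEL : 0 < E ^ L := by positivity
  refine ⟨min (1 / 2) (min (C1 / (2 * C)) (min (θ / (2 * C)) (min (1 / R) (c / (2 * E ^ L))))),
    ⟨by positivity, lt_of_le_of_lt (min_le_left _ _) (by norm_num)⟩, ?_⟩
  rintro ε ⟨hε, hεle⟩ a b α β γ δ κ hyp x0 N M₁ M₂ hx0 hM₁ hM₁₂ hM₂ hM1n hM2r
  simp only [le_min_iff] at hεle
  obtain ⟨f1, f2, f3, f4, f5⟩ := hεle
  rw [le_div_iff₀ (by positivity)] at f2 f3 f4 f5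
  have hε1 : ε ≤ 1 := by linarith
  have e1 : ε * C < C1 := by linarith [mul_pos hε hC]
  have e2 : ε * C ≤ θ / 2 := by linarith
  have e3 : R * ε ≤ 1 := by linarith
  have e4 : E ^ L * ε ^ 2 < c := by nlinarith [mul_pos hε hEL]
  set x := orbit (fun n => Qmat ε (a n) (b n) (α n) (β n) (γ n) (δ n))
              (fun n => Dmat (κ n)) x0 with hxdef
  have hRε : 0 < R * ε := mul_pos hR hε
  have hκ : ∀ n, 0 < κ (n + 1) ∧ κ (n + 1) ≤ C4 := fun n =>
    ⟨(hyp (n + 1) (by omega)).2.2.2.2.2.2.1, (hyp (n + 1) (by omega)).2.2.2.2.2.2.2⟩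
  -- one full step
  have step : ∀ n : ℕ, ∀ y : ℝ, x n = (y : OnePoint ℝ) → R * ε * (κ (n + 1) ^ 2 * y) ≤ 1 →
      ∃ w : ℝ, x (n + 1) = (w : OnePoint ℝ) ∧ w ≤ q * max (κ (n + 1) ^ 2 * y) (R * ε) ∧
        (0 < y → 0 < w) := by
    intro n y hy hz
    obtain ⟨g1, g2, g3, g4, g5, g6, g7, g8⟩ := hyp (n + 1) (by omega)
    obtain ⟨w, hw1, hw2, hw3⟩ := mobius_Q_coe ε (a (n + 1)) (b (n + 1)) (α (n + 1)) (β (n + 1))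
      (γ (n + 1)) (δ (n + 1)) C1 C2 C R θ q (κ (n + 1) ^ 2 * y) hε hε1 hC1 hC12 g1 g2
      (g3.trans hC3) (g4.trans hC3) (g5.trans hC3) (g6.trans hC3) hθ hθ1 hqθ hR hRθ e1 e2 e3 hz
    refine ⟨w, ?_, hw2, fun h => hw3 (by positivity)⟩
    have : x (n + 1) = mobius (Qmat ε (a (n + 1)) (b (n + 1)) (α (n + 1)) (β (n + 1))
      (γ (n + 1)) (δ (n + 1))) (mobius (Dmat (κ (n + 1))) (x n)) := rfl
    rw [this, hy, mobius_D_coe _ _ g7, hw1]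
  -- first exit time
  obtain ⟨m, hmM, hm0, hmn⟩ : ∃ m, m + 1 ≤ M₁ ∧ regI (x m) ∧ ¬ regI (x (m + 1)) := by
    by_contra hcon
    push Not at hcon
    have : ∀ n, n ≤ M₁ → regI (x n) := by
      intro n
      induction n with
      | zero => intro _; exact hx0
      | succ n ih => intro h; exact hcon n h (ih (by omega))
    exact hM1n (this M₁ le_rfl)
  have hpos : ∀ n, 0 < q * κ (n + 1) ^ 2 := fun n => by
    have := (hκ n).1
    positivity
  have key : ∀ n, m + 1 ≤ n →
      (∃ y : ℝ, 0 < y ∧ x n = (y : OnePoint ℝ) ∧ ∃ s, m + 1 ≤ s ∧ s ≤ n ∧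
        y ≤ q * R * ε * ∏ i ∈ Finset.Icc (s + 1) n, q * κ i ^ 2) ∨
      (∃ T, T < n ∧ ∃ y : ℝ, 0 < y ∧ 1 < R * ε * (κ (T + 1) ^ 2 * y) ∧ ∃ s, m + 1 ≤ s ∧ s ≤ T ∧
        y ≤ q * R * ε * ∏ i ∈ Finset.Icc (s + 1) T, q * κ i ^ 2) := by
    intro n hn
    induction n, hn using Nat.le_induction with
    | base =>
      left
      obtain ⟨r, hr, hr0⟩ := hm0
      have hz0 : κ (m + 1) ^ 2 * r ≤ 0 := mul_nonpos_of_nonneg_of_nonpos (sq_nonneg _) hr0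
      obtain ⟨w, hw1, hw2, -⟩ := step m r hr
        ((mul_nonpos_of_nonneg_of_nonpos hRε.le hz0).trans zero_le_one)
      refine ⟨w, ?_, hw1, m + 1, le_rfl, le_rfl, ?_⟩
      · by_contra hcon
        exact hmn ⟨w, hw1, not_lt.mp hcon⟩
      · rw [max_eq_right (by linarith)] at hw2
        simp only [Order.lt_add_one_iff, le_refl, Finset.Icc_eq_empty_of_lt, Finset.prod_empty]
        linarith
    | succ n hn ih =>
      rcases ih with ⟨y, hy0, hy, s, hs1, hs2, hys⟩ | ⟨T, hT, rest⟩
      · by_cases hz : R * ε * (κ (n + 1) ^ 2 * y) ≤ 1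
        · left
          obtain ⟨w, hw1, hw2, hw3⟩ := step n y hy hz
          refine ⟨w, hw3 hy0, hw1, ?_⟩
          rcases le_total (κ (n + 1) ^ 2 * y) (R * ε) with h | h
          · rw [max_eq_right h] at hw2
            refine ⟨n + 1, by omega, le_rfl, ?_⟩
            simp only [Order.lt_add_one_iff, le_refl, Finset.Icc_eq_empty_of_lt,
              Finset.prod_empty]
            linarith
          · rw [max_eq_left h] at hw2
            refine ⟨s, hs1, by omega, ?_⟩
            rw [Finset.prod_Icc_succ_top (by omega)]
            have := mul_le_mul_of_nonneg_left hys (hpos n).le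
            linarith
        · right
          exact ⟨n, by omega, y, hy0, not_le.mp hz, s, hs1, hs2, hys⟩
      · right
        exact ⟨T, by omega, rest⟩
  rcases key M₂ (by omega) with ⟨y, hy0, hy, -⟩ | ⟨T, hT, y, hy0, hyT, s, hs1, hs2, hys⟩
  · exfalso
    obtain ⟨r, hr, hr0⟩ := hM2r
    rw [hy] at hr
    have : y = r := OnePoint.coe_injective hr
    linarith
  have hfac : ∀ i ∈ Finset.Icc (s + 2) T, 0 < q * κ i ^ 2 ∧ q * κ i ^ 2 ≤ E := by
    intro i hi
    rw [Finset.mem_Icc] at hi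
    obtain ⟨j, rfl⟩ : ∃ j, i = j + 1 := ⟨i - 1, by omega⟩
    refine ⟨hpos j, ?_⟩
    have : κ (j + 1) ^ 2 ≤ C4 ^ 2 := pow_le_pow_left₀ (hκ j).1.le (hκ j).2 2
    rw [hEdef]
    have := mul_le_mul_of_nonneg_left this hq0.le
    linarith
  obtain ⟨W, hW⟩ : ∃ W, W = ∏ i ∈ Finset.Icc (s + 2) T, q * κ i ^ 2 := ⟨_, rfl⟩
  have hW0 : 0 < W := by rw [hW]; exact Finset.prod_pos fun i hi => (hfac i hi).1
  have hκ2 : ∀ j, κ (j + 1) ^ 2 ≤ C4 ^ 2 := fun j => pow_le_pow_left₀ (hκ j).1.le (hκ j).2 2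
  have hsplit : ∏ i ∈ Finset.Icc (s + 1) T, q * κ i ^ 2 ≤ E * W := by
    rcases Nat.lt_or_ge s T with h | h
    · rw [← Finset.mul_prod_Ioc_eq_prod_Icc (by omega), hW]
      have hI : Finset.Ioc (s + 1) T = Finset.Icc (s + 2) T := by
        ext i; simp only [Finset.mem_Ioc, Finset.mem_Icc]; omega
      rw [hI, ← hW]
      apply mul_le_mul_of_nonneg_right _ hW0.le
      have := hκ2 s
      rw [hEdef]
      have := mul_le_mul_of_nonneg_left this hq0.le
      linarith
    · rw [hW, Finset.Icc_eq_empty_of_lt (by omega), Finset.Icc_eq_empty_of_lt (by omega)]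
      simpa using hE1
  have hWc : c ≤ W * ε ^ 2 := by
    have h1 : y ≤ q * R * ε * (E * W) :=
      hys.trans (mul_le_mul_of_nonneg_left hsplit (by positivity))
    have h2 : κ (T + 1) ^ 2 * y ≤ C4 ^ 2 * (q * R * ε * (E * W)) :=
      mul_le_mul (hκ2 T) h1 hy0.le (by positivity)
    have h3 := mul_le_mul_of_nonneg_left h2 hRε.le
    rw [hcdef, div_le_iff₀ (by positivity)]
    linarith
  have hWE : W ≤ E ^ (T + 1 - (s + 2)) := by
    rw [hW, ← Nat.card_Icc]
    rw [← Finset.prod_const]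
    exact Finset.prod_le_prod (fun i hi => (hfac i hi).1.le) (fun i hi => (hfac i hi).2)
  have hlen : L < T + 1 - (s + 2) := by
    by_contra hcon
    have h1 : E ^ (T + 1 - (s + 2)) ≤ E ^ L := pow_le_pow_right₀ hE1 (not_lt.mp hcon)
    have : W * ε ^ 2 ≤ E ^ L * ε ^ 2 := mul_le_mul_of_nonneg_right (hWE.trans h1) (sq_nonneg ε)
    linarith
  refine ⟨s + 2, T, by omega, by omega, by omega, ?_⟩
  have hprod : ∏ n ∈ Finset.Icc (s + 2) T, k * κ n ^ 2 = q ^ (T + 1 - (s + 2)) * W := by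
    rw [hW, ← Nat.card_Icc, ← Finset.prod_const, ← Finset.prod_mul_distrib]
    refine Finset.prod_congr rfl fun i _ => ?_
    rw [← hq2]; ring
  rw [hprod, mul_inv, ← htdef, ← div_eq_mul_inv, div_lt_iff₀ (by positivity)]
  have h1 : q ^ L ≤ q ^ (T + 1 - (s + 2)) := pow_le_pow_right₀ hq1.le hlen.le
  rw [div_lt_iff₀ hc] at hL
  calc t < q ^ L * c := hL
    _ ≤ q ^ (T + 1 - (s + 2)) * (W * ε ^ 2) := mul_le_mul h1 hWc hc.le (by positivity)
    _ = _ := by ring
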